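/- arXiv:1707.07739 — 2 statements merged into one kernel-verified Lean document; each statement's English description precedes it below -/
import Mathlib

section
/- (Multiplexing, dependent case.) Let θ > 0 and let p, q > 1 with 1/p + 1/q = 1. Let A₁ and A₂ be flows on a common probability space (not assumed independent), with A₁ MGF-bounded for pθ with bounding functions (ρ₁, σ₁) and A₂ MGF-bounded for qθ with bounding functions (ρ₂, σ₂). Then the aggregate A := A₁ + A₂ is MGF-bounded for θ with bounding functions ρ(θ) = ρ₁(pθ) + ρ₂(qθ) and σ(θ) = σ₁(pθ) + σ₂(qθ); that is, E[e^{θ(A₁(s,t)+A₂(s,t))}] ≤ e^{θ(ρ₁(pθ)+ρ₂(qθ))(t−s) + θ(σ₁(pθ)+σ₂(qθ))} for all s ≤ t. -/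
open MeasureTheory ProbabilityTheory

/-! The increment of the aggregate is the sum of the increments, so its exponential is a product,
to which Hölder's inequality applies whatever the joint law of the flows:
`E[exp (θ (X + Y))] ≤ E[exp (p θ X)] ^ (1 / p) * E[exp (q θ Y)] ^ (1 / q)`. Since the exponents in
the two assumed bounds carry the factors `p` and `q`, the roots turn them into bounds at `θ`. -/

open scoped ENNReal

theorem ofReal_exp_rpow (x r : ℝ) :
    ENNReal.ofReal (Real.exp x) ^ r = ENNReal.ofReal (Real.exp (r * x)) := by
  rw [ENNReal.ofReal_rpow_of_pos (Real.exp_pos x), ← Real.exp_mul, mul_comm]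

theorem ofReal_exp_add (x y : ℝ) :
    ENNReal.ofReal (Real.exp (x + y)) =
      ENNReal.ofReal (Real.exp x) * ENNReal.ofReal (Real.exp y) := by
  rw [Real.exp_add, ENNReal.ofReal_mul (Real.exp_nonneg x)]

theorem rpow_one_div_le_ofReal_exp_iff {p : ℝ} (hp : 0 < p) {x : ℝ≥0∞} {a : ℝ} :
    x ^ (1 / p) ≤ ENNReal.ofReal (Real.exp a) ↔ x ≤ ENNReal.ofReal (Real.exp (p * a)) := by
  rw [one_div, ENNReal.rpow_inv_le_iff hp, ofReal_exp_rpow]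

section

variable {Ω : Type*} [MeasurableSpace Ω] {μ : Measure Ω} {p q : ℝ}

theorem lintegral_ofReal_exp_add_le_rpow_mul_rpow (hpq : p.HolderConjugate q) {X Y : Ω → ℝ}
    (hX : AEMeasurable X μ) (hY : AEMeasurable Y μ) :
    ∫⁻ ω, ENNReal.ofReal (Real.exp (X ω + Y ω)) ∂μ ≤
      (∫⁻ ω, ENNReal.ofReal (Real.exp (p * X ω)) ∂μ) ^ (1 / p) *
        (∫⁻ ω, ENNReal.ofReal (Real.exp (q * Y ω)) ∂μ) ^ (1 / q) := by
  simpa only [Pi.mul_apply, ← ofReal_exp_add, ofReal_exp_rpow] using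
    ENNReal.lintegral_mul_le_Lp_mul_Lq μ hpq hX.exp.ennreal_ofReal hY.exp.ennreal_ofReal

theorem lintegral_ofReal_exp_add_le (hpq : p.HolderConjugate q) {X Y : Ω → ℝ}
    (hX : AEMeasurable X μ) (hY : AEMeasurable Y μ) {a b : ℝ}
    (hXa : ∫⁻ ω, ENNReal.ofReal (Real.exp (p * X ω)) ∂μ ≤ ENNReal.ofReal (Real.exp (p * a)))
    (hYb : ∫⁻ ω, ENNReal.ofReal (Real.exp (q * Y ω)) ∂μ ≤ ENNReal.ofReal (Real.exp (q * b))) :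
    ∫⁻ ω, ENNReal.ofReal (Real.exp (X ω + Y ω)) ∂μ ≤ ENNReal.ofReal (Real.exp (a + b)) :=
  calc
    ∫⁻ ω, ENNReal.ofReal (Real.exp (X ω + Y ω)) ∂μ
      ≤ (∫⁻ ω, ENNReal.ofReal (Real.exp (p * X ω)) ∂μ) ^ (1 / p) *
          (∫⁻ ω, ENNReal.ofReal (Real.exp (q * Y ω)) ∂μ) ^ (1 / q) :=
        lintegral_ofReal_exp_add_le_rpow_mul_rpow hpq hX hY
    _ ≤ ENNReal.ofReal (Real.exp a) * ENNReal.ofReal (Real.exp b) :=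
        mul_le_mul' ((rpow_one_div_le_ofReal_exp_iff hpq.pos).2 hXa)
          ((rpow_one_div_le_ofReal_exp_iff hpq.symm.pos).2 hYb)
    _ = ENNReal.ofReal (Real.exp (a + b)) := (ofReal_exp_add a b).symm

/-- The process `A` is MGF-bounded for `θ` with envelope `b`: the increment of `A` from `s` to `t`
has moment generating function at most `exp (θ * b s t)` at `θ`. The expectation is a lower Lebesgue
integral, so that the bound includes finiteness of the moment generating function. -/
def IsMGFBounded {T : Type*} [LE T] (μ : Measure Ω) (θ : ℝ) (A : T → Ω → ℝ) (b : T → T → ℝ) :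
    Prop :=
  ∀ s t, s ≤ t →
    ∫⁻ ω, ENNReal.ofReal (Real.exp (θ * (A t ω - A s ω))) ∂μ ≤
      ENNReal.ofReal (Real.exp (θ * b s t))

/-- The envelope `ρ * (t - s) + σ` given in discrete time by the values `ρ`, `σ` of the bounding
functions. -/
def affineEnvelope (ρ σ : ℝ) (s t : ℕ) : ℝ := ρ * ((t : ℝ) - (s : ℝ)) + σ

theorem affineEnvelope_add (ρ₁ σ₁ ρ₂ σ₂ : ℝ) :
    affineEnvelope ρ₁ σ₁ + affineEnvelope ρ₂ σ₂ = affineEnvelope (ρ₁ + ρ₂) (σ₁ + σ₂) := by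
  ext s t
  simp only [affineEnvelope, Pi.add_apply]
  ring

theorem isMGFBounded_affineEnvelope_iff {θ ρ σ : ℝ} {A : ℕ → Ω → ℝ} :
    IsMGFBounded μ θ A (affineEnvelope ρ σ) ↔ ∀ s t, s ≤ t →
      ∫⁻ ω, ENNReal.ofReal (Real.exp (θ * (A t ω - A s ω))) ∂μ ≤
        ENNReal.ofReal (Real.exp (θ * ρ * ((t : ℝ) - (s : ℝ)) + θ * σ)) := by
  simp only [IsMGFBounded, affineEnvelope, mul_add, mul_assoc]

theorem multiplexing_dependent_general {T : Type*} [LE T] (hpq : p.HolderConjugate q) {θ : ℝ}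
    {A₁ A₂ : T → Ω → ℝ} {b₁ b₂ : T → T → ℝ}
    (hA₁ : ∀ t, AEMeasurable (A₁ t) μ) (hA₂ : ∀ t, AEMeasurable (A₂ t) μ)
    (h₁ : IsMGFBounded μ (p * θ) A₁ b₁) (h₂ : IsMGFBounded μ (q * θ) A₂ b₂) :
    IsMGFBounded μ θ (A₁ + A₂) (b₁ + b₂) := by
  intro s t hst
  have hX : AEMeasurable (fun ω => θ * (A₁ t ω - A₁ s ω)) μ := ((hA₁ t).sub (hA₁ s)).const_mul θ
  have hY : AEMeasurable (fun ω => θ * (A₂ t ω - A₂ s ω)) μ := ((hA₂ t).sub (hA₂ s)).const_mul θ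
  simp only [Pi.add_apply, add_sub_add_comm, mul_add]
  apply lintegral_ofReal_exp_add_le hpq hX hY
  · simpa only [mul_assoc] using h₁ s t hst
  · simpa only [mul_assoc] using h₂ s t hst

end

/-- Multiplexing, dependent case: with Hölder parameters `p, q`,
if `A₁` is MGF-bounded for `pθ` with values `(ρ₁, σ₁) = (ρ₁(pθ), σ₁(pθ))` and
`A₂` is MGF-bounded for `qθ` with values `(ρ₂, σ₂) = (ρ₂(qθ), σ₂(qθ))`, then the
aggregate is MGF-bounded for `θ` with `ρ = ρ₁ + ρ₂` and `σ = σ₁ + σ₂`. -/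
theorem multiplexing_dependent
    {Ω : Type*} [MeasurableSpace Ω] (P : Measure Ω) [IsProbabilityMeasure P]
    (θ : ℝ) (hθ : 0 < θ)
    (p q : ℝ) (hp : 1 < p) (hq : 1 < q) (hpq : 1 / p + 1 / q = 1)
    (A₁ A₂ : ℕ → Ω → ℝ)
    (ρ₁ σ₁ ρ₂ σ₂ : ℝ)
    -- A₁ and A₂ are flows
    (hA₁meas : ∀ t, Measurable (A₁ t))
    (hA₁mono : ∀ ω, Monotone fun t => A₁ t ω)
    (hA₁zero : ∀ ω, A₁ 0 ω = 0)
    (hA₂meas : ∀ t, Measurable (A₂ t))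
    (hA₂mono : ∀ ω, Monotone fun t => A₂ t ω)
    (hA₂zero : ∀ ω, A₂ 0 ω = 0)
    -- A₁ is MGF-bounded for pθ, A₂ is MGF-bounded for qθ
    (hA₁bound : ∀ s t, s ≤ t →
      ∫⁻ ω, ENNReal.ofReal (Real.exp (p * θ * (A₁ t ω - A₁ s ω))) ∂P
        ≤ ENNReal.ofReal (Real.exp (p * θ * ρ₁ * ((t : ℝ) - (s : ℝ)) + p * θ * σ₁)))
    (hA₂bound : ∀ s t, s ≤ t →
      ∫⁻ ω, ENNReal.ofReal (Real.exp (q * θ * (A₂ t ω - A₂ s ω))) ∂P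
        ≤ ENNReal.ofReal (Real.exp (q * θ * ρ₂ * ((t : ℝ) - (s : ℝ)) + q * θ * σ₂))) :
    ∀ s t, s ≤ t →
      ∫⁻ ω, ENNReal.ofReal (Real.exp (θ * ((A₁ t ω - A₁ s ω) + (A₂ t ω - A₂ s ω)))) ∂P
        ≤ ENNReal.ofReal (Real.exp (θ * (ρ₁ + ρ₂) * ((t : ℝ) - (s : ℝ)) + θ * (σ₁ + σ₂))) := by
  have hconj : p.HolderConjugate q :=
    Real.holderConjugate_iff.mpr ⟨hp, by simpa only [one_div] using hpq⟩
  simpa only [affineEnvelope_add, isMGFBounded_affineEnvelope_iff, Pi.add_apply,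
      add_sub_add_comm] using
    multiplexing_dependent_general hconj
      (fun t => (hA₁meas t).aemeasurable) (fun t => (hA₂meas t).aemeasurable)
      (isMGFBounded_affineEnvelope_iff.mpr hA₁bound)
      (isMGFBounded_affineEnvelope_iff.mpr hA₂bound)
end

section
/- (Output bound for an aggregate of two flows.) Let θ > 0. Let A₁, A₂ be flows and U a service process on a common probability space, with A₁, A₂, U mutually stochastically independent, A₁ MGF-bounded for θ with bounding functions (ρ_{A₁}, σ_{A₁}), A₂ MGF-bounded for θ with (ρ_{A₂}, σ_{A₂}), and U MGF-bounded for θ with (ρ_U, σ_U). Let B be the output of a dynamic U-server with input A₁ + A₂. If ρ_{A₁}(θ) + ρ_{A₂}(θ) + ρ_U(θ) < 0, then for all s ≤ t: E[e^{θ B(s,t)}] ≤ e^{θ(ρ_{A₁}(θ)+ρ_{A₂}(θ))(t−s) + θ(σ_{A₁}(θ)+σ_{A₂}(θ)+σ_U(θ))} / (1 − e^{θ(ρ_{A₁}(θ)+ρ_{A₂}(θ)+ρ_U(θ))}). -/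
/-!
The minimum in the server inequality at time `s` is attained at some `u ≤ s`, which together with
`B t ≤ A t` gives the pathwise bound `B(s,t) ≤ A(u,t) - U(u,s)`. The random index `u` is removed by
a union bound: `E[exp (θ B(s,t))]` is at most the sum over all `u ≤ s` of
`E[exp (θ (A(u,t) - U(u,s)))]`. By independence each term factorizes, so that it decays like
`q ^ (s - u)` with `q = exp (θ (ρ_A + ρ_U))`, and stability means that the geometric series
converges. Aggregation of flows enters only through `A = A₁ + A₂`: the bounding functions of
independent flows add up.
-/

open MeasureTheory ProbabilityTheory

lemma sum_range_succ_exp_le_div_one_sub_exp {κ : ℝ} (hκ : κ < 0) (a : ℝ) (n : ℕ) :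
    ∑ u ∈ Finset.range (n + 1), Real.exp (a + κ * ((n : ℝ) - u)) ≤
      Real.exp a / (1 - Real.exp κ) := by
  have hpow : ∀ u ∈ Finset.range (n + 1),
      Real.exp (a + κ * ((n : ℝ) - u)) = Real.exp a * Real.exp κ ^ (n - u) := by
    intro u hu
    rw [← Real.exp_nat_mul, Nat.cast_sub (Finset.mem_range_succ_iff.1 hu), Real.exp_add,
      mul_comm κ]
  calc ∑ u ∈ Finset.range (n + 1), Real.exp (a + κ * ((n : ℝ) - u))
      = Real.exp a * ∑ u ∈ Finset.range (n + 1), Real.exp κ ^ (n - u) := by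
        rw [Finset.sum_congr rfl hpow, Finset.mul_sum]
    _ = Real.exp a * ∑ i ∈ Finset.range (n + 1), Real.exp κ ^ i := by
        rw [Finset.sum_flip fun i => Real.exp κ ^ i]
    _ ≤ Real.exp a * (1 / (1 - Real.exp κ)) := by
        gcongr
        simpa using geom_sum_Ico_le_of_lt_one (m := 0) (n := n + 1) (Real.exp_pos κ).le
          (Real.exp_lt_one_iff.2 hκ)
    _ = Real.exp a / (1 - Real.exp κ) := mul_one_div _ _

/-- The increment `A(s,t) = A(t) - A(s)` of a process. -/
def increment {Ω : Type*} (A : ℕ → Ω → ℝ) (s t : ℕ) (ω : Ω) : ℝ :=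
  A t ω - A s ω

lemma increment_add {Ω : Type*} (A₁ A₂ : ℕ → Ω → ℝ) :
    increment (A₁ + A₂) = increment A₁ + increment A₂ := by
  funext s t ω
  exact add_sub_add_comm _ _ _ _

/-- A sample path `B` is a possible output of a dynamic `U`-server with input path `A`. The minimum
over the finite set of times `0 ≤ s ≤ t` is encoded as an `sInf`. -/
structure IsDynamicServerOutput (A : ℕ → ℝ) (U : ℕ → ℕ → ℝ) (B : ℕ → ℝ) : Prop where
  sInf_le : ∀ t, sInf ((fun s => A s + U s t) '' Set.Icc 0 t) ≤ B t
  le_input : ∀ t, B t ≤ A t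

lemma IsDynamicServerOutput.exists_sub_le {A B : ℕ → ℝ} {U : ℕ → ℕ → ℝ}
    (h : IsDynamicServerOutput A U B) (s t : ℕ) :
    ∃ u ≤ s, B t - B s ≤ A t - A u - U u s := by
  obtain ⟨u, hu, hmin⟩ := ((Set.nonempty_Icc.2 s.zero_le).image fun u => A u + U u s).csInf_mem
    ((Set.finite_Icc 0 s).image _)
  have hBs : A u + U u s ≤ B s := hmin.trans_le (h.sInf_le s)
  exact ⟨u, hu.2, by linarith [h.le_input t]⟩

lemma measurable_iSup_comap {Ω ι β : Type*} [MeasurableSpace β] (X : ι → Ω → β) (i : ι) :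
    Measurable[⨆ j, MeasurableSpace.comap (X j) inferInstance] (X i) :=
  Measurable.of_comap_le (le_iSup (fun j => MeasurableSpace.comap (X j) inferInstance) i)

lemma measurable_increment {Ω : Type*} [MeasurableSpace Ω] {A : ℕ → Ω → ℝ}
    (hA : ∀ t, Measurable (A t)) (s t : ℕ) : Measurable (increment A s t) :=
  (hA t).sub (hA s)

section Independence

variable {Ω : Type*} [MeasurableSpace Ω] {P : Measure Ω}

lemma iIndepFun_of_iIndep_of_measurable {ι : Type*} {m : ι → MeasurableSpace Ω} (h : iIndep m P)
    {β : ι → Type*} [∀ i, MeasurableSpace (β i)] {X : ∀ i, Ω → β i}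
    (hX : ∀ i, Measurable[m i] (X i)) : iIndepFun X P := by
  rw [iIndepFun_iff_iIndep]
  exact iIndep_of_iIndep_of_le h fun i => (hX i).comap_le

lemma iIndepFun_increment_increment_of_iIndep {A₁ A₂ : ℕ → Ω → ℝ} {U : ℕ → ℕ → Ω → ℝ}
    (h : iIndep
      ![⨆ t, MeasurableSpace.comap (A₁ t) inferInstance,
        ⨆ t, MeasurableSpace.comap (A₂ t) inferInstance,
        ⨆ p : ℕ × ℕ, MeasurableSpace.comap (U p.1 p.2) inferInstance] P) (u s t : ℕ) :
    iIndepFun ![increment A₁ u t, increment A₂ u t, U u s] P := by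
  refine iIndepFun_of_iIndep_of_measurable h fun i => ?_
  fin_cases i
  · exact @measurable_increment _ (_) _ (measurable_iSup_comap A₁) u t
  · exact @measurable_increment _ (_) _ (measurable_iSup_comap A₂) u t
  · exact measurable_iSup_comap (fun p : ℕ × ℕ => U p.1 p.2) (u, s)

end Independence

section MomentGeneratingFunction

variable {Ω : Type*} [MeasurableSpace Ω] {P : Measure Ω} {θ : ℝ}

/-- The moment generating function `E[exp (θ X)]` as a Lebesgue integral. In contrast to
`ProbabilityTheory.mgf`, it is `∞` rather than `0` when the expectation is infinite. -/
noncomputable def lmgf (X : Ω → ℝ) (P : Measure Ω) (θ : ℝ) : ENNReal :=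
  ∫⁻ ω, ENNReal.ofReal (Real.exp (θ * X ω)) ∂P

lemma lmgf_neg (X : Ω → ℝ) (P : Measure Ω) (θ : ℝ) : lmgf (-X) P θ = lmgf X P (-θ) := by
  simp only [lmgf, Pi.neg_apply, neg_mul_comm]

lemma lmgf_add_of_indepFun {X Y : Ω → ℝ} (hX : AEMeasurable X P) (hY : AEMeasurable Y P)
    (hXY : IndepFun X Y P) : lmgf (X + Y) P θ = lmgf X P θ * lmgf Y P θ := by
  have hmeas : Measurable fun x : ℝ => ENNReal.ofReal (Real.exp (θ * x)) := by fun_prop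
  simp only [lmgf, Pi.add_apply, mul_add, Real.exp_add, ENNReal.ofReal_mul (Real.exp_pos _).le]
  exact lintegral_mul_eq_lintegral_mul_lintegral_of_indepFun'' (hmeas.comp_aemeasurable hX)
    (hmeas.comp_aemeasurable hY) (hXY.comp hmeas hmeas)

lemma lmgf_le_sum_of_ae_exists_le {ι : Type*} {I : Finset ι} {X : ι → Ω → ℝ} {Z : Ω → ℝ}
    (hθ : 0 ≤ θ) (hX : ∀ i ∈ I, AEMeasurable (X i) P)
    (hZ : ∀ᵐ ω ∂P, ∃ i ∈ I, Z ω ≤ X i ω) : lmgf Z P θ ≤ ∑ i ∈ I, lmgf (X i) P θ := by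
  have hpoint : ∀ᵐ ω ∂P, ENNReal.ofReal (Real.exp (θ * Z ω)) ≤
      ∑ i ∈ I, ENNReal.ofReal (Real.exp (θ * X i ω)) := by
    filter_upwards [hZ] with ω ⟨i, hi, hle⟩
    calc ENNReal.ofReal (Real.exp (θ * Z ω))
        ≤ ENNReal.ofReal (Real.exp (θ * X i ω)) := by gcongr
      _ ≤ ∑ i ∈ I, ENNReal.ofReal (Real.exp (θ * X i ω)) :=
        Finset.single_le_sum (f := fun i => ENNReal.ofReal (Real.exp (θ * X i ω)))
          (fun _ _ => zero_le) hi
  refine (lintegral_mono_ae hpoint).trans_eq (lintegral_finsetSum' I fun i hi => ?_)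
  have hXi := hX i hi
  fun_prop

/-- The bivariate process `X` is MGF-bounded for `θ` with bounding functions taking the values `ρ`
and `σ` at `θ`. A flow `A` is MGF-bounded if `increment A` is, and a service process `U` if `-U`
is. -/
def MGFBounded (P : Measure Ω) (θ : ℝ) (X : ℕ → ℕ → Ω → ℝ) (ρ σ : ℝ) : Prop :=
  ∀ s t, s ≤ t →
    lmgf (X s t) P θ ≤ ENNReal.ofReal (Real.exp (θ * ρ * ((t : ℝ) - (s : ℝ)) + θ * σ))

namespace MGFBounded

variable {X Y : ℕ → ℕ → Ω → ℝ} {ρX σX ρY σY : ℝ}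

lemma lmgf_add_le (hX : MGFBounded P θ X ρX σX) (hY : MGFBounded P θ Y ρY σY) {s t s' t' : ℕ}
    (hst : s ≤ t) (hst' : s' ≤ t') (hXm : AEMeasurable (X s t) P) (hYm : AEMeasurable (Y s' t') P)
    (hXY : IndepFun (X s t) (Y s' t') P) :
    lmgf (X s t + Y s' t') P θ ≤ ENNReal.ofReal (Real.exp
      (θ * ρX * ((t : ℝ) - s) + θ * σX + (θ * ρY * ((t' : ℝ) - s') + θ * σY))) := by
  rw [lmgf_add_of_indepFun hXm hYm hXY, Real.exp_add, ENNReal.ofReal_mul (Real.exp_pos _).le]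
  exact mul_le_mul' (hX s t hst) (hY s' t' hst')

lemma add (hX : MGFBounded P θ X ρX σX) (hY : MGFBounded P θ Y ρY σY)
    (hXm : ∀ s t, s ≤ t → AEMeasurable (X s t) P) (hYm : ∀ s t, s ≤ t → AEMeasurable (Y s t) P)
    (hXY : ∀ s t, s ≤ t → IndepFun (X s t) (Y s t) P) :
    MGFBounded P θ (X + Y) (ρX + ρY) (σX + σY) := by
  intro s t hst
  refine (hX.lmgf_add_le hY hst hst (hXm s t hst) (hYm s t hst) (hXY s t hst)).trans_eq ?_
  ring_nf

theorem lmgf_increment_output_le {A B : ℕ → Ω → ℝ} {U : ℕ → ℕ → Ω → ℝ} {ρA σA ρU σU : ℝ}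
    (hA : MGFBounded P θ (increment A) ρA σA) (hU : MGFBounded P θ (-U) ρU σU) (hθ : 0 < θ)
    (hAm : ∀ s t, s ≤ t → AEMeasurable (increment A s t) P)
    (hUm : ∀ s t, s ≤ t → AEMeasurable (U s t) P)
    (hAU : ∀ u s t, u ≤ s → s ≤ t → IndepFun (increment A u t) (U u s) P)
    (hB : ∀ᵐ ω ∂P, IsDynamicServerOutput (fun t => A t ω) (fun s t => U s t ω) (fun t => B t ω))
    (hstab : ρA + ρU < 0) {s t : ℕ} (hst : s ≤ t) :
    lmgf (increment B s t) P θ ≤ ENNReal.ofReal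
      (Real.exp (θ * ρA * ((t : ℝ) - (s : ℝ)) + θ * (σA + σU)) /
        (1 - Real.exp (θ * (ρA + ρU)))) := by
  set a : ℝ := θ * ρA * ((t : ℝ) - (s : ℝ)) + θ * (σA + σU) with ha
  have hUm_neg : ∀ u ≤ s, AEMeasurable ((-U) u s) P := fun u hu => (hUm u s hu).neg
  have hpath : ∀ᵐ ω ∂P, ∃ u ∈ Finset.range (s + 1),
      increment B s t ω ≤ (increment A u t + (-U) u s) ω := by
    filter_upwards [hB] with ω hω
    obtain ⟨u, hu, hle⟩ := hω.exists_sub_le s t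
    exact ⟨u, Finset.mem_range_succ_iff.2 hu, hle.trans_eq (sub_eq_add_neg _ _)⟩
  have hterm : ∀ u ∈ Finset.range (s + 1), lmgf (increment A u t + (-U) u s) P θ ≤
      ENNReal.ofReal (Real.exp (a + θ * (ρA + ρU) * ((s : ℝ) - u))) := by
    intro u hu
    have hus := Finset.mem_range_succ_iff.1 hu
    refine (hA.lmgf_add_le hU (hus.trans hst) hus (hAm u t (hus.trans hst)) (hUm_neg u hus)
      ((hAU u s t hus hst).comp measurable_id measurable_neg)).trans_eq ?_
    rw [ha]
    ring_nf
  calc lmgf (increment B s t) P θ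
      ≤ ∑ u ∈ Finset.range (s + 1), lmgf (increment A u t + (-U) u s) P θ :=
        lmgf_le_sum_of_ae_exists_le hθ.le (fun u hu =>
          have hus := Finset.mem_range_succ_iff.1 hu
          (hAm u t (hus.trans hst)).add (hUm_neg u hus)) hpath
    _ ≤ ∑ u ∈ Finset.range (s + 1),
          ENNReal.ofReal (Real.exp (a + θ * (ρA + ρU) * ((s : ℝ) - u))) := Finset.sum_le_sum hterm
    _ = ENNReal.ofReal (∑ u ∈ Finset.range (s + 1),
          Real.exp (a + θ * (ρA + ρU) * ((s : ℝ) - u))) :=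
        (ENNReal.ofReal_sum_of_nonneg fun u _ => (Real.exp_pos _).le).symm
    _ ≤ ENNReal.ofReal (Real.exp a / (1 - Real.exp (θ * (ρA + ρU)))) :=
        ENNReal.ofReal_le_ofReal
          (sum_range_succ_exp_le_div_one_sub_exp (mul_neg_of_pos_of_neg hθ hstab) a s)

end MGFBounded

end MomentGeneratingFunction

theorem output_bound_aggregate_general {Ω : Type*} [MeasurableSpace Ω] {P : Measure Ω}
    {θ : ℝ} (hθ : 0 < θ) {A₁ A₂ B : ℕ → Ω → ℝ} {U : ℕ → ℕ → Ω → ℝ}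
    {ρA₁ σA₁ ρA₂ σA₂ ρU σU : ℝ}
    (hA₁m : ∀ s t, s ≤ t → AEMeasurable (increment A₁ s t) P)
    (hA₂m : ∀ s t, s ≤ t → AEMeasurable (increment A₂ s t) P)
    (hUm : ∀ s t, s ≤ t → AEMeasurable (U s t) P)
    (hA₁ : MGFBounded P θ (increment A₁) ρA₁ σA₁)
    (hA₂ : MGFBounded P θ (increment A₂) ρA₂ σA₂)
    (hU : MGFBounded P θ (-U) ρU σU)
    (hIndep : ∀ u s t, u ≤ s → s ≤ t →
      iIndepFun ![increment A₁ u t, increment A₂ u t, U u s] P)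
    (hB : ∀ᵐ ω ∂P, IsDynamicServerOutput
      (fun t => A₁ t ω + A₂ t ω) (fun s t => U s t ω) (fun t => B t ω))
    (hstab : ρA₁ + ρA₂ + ρU < 0) {s t : ℕ} (hst : s ≤ t) :
    lmgf (increment B s t) P θ ≤ ENNReal.ofReal
      (Real.exp (θ * (ρA₁ + ρA₂) * ((t : ℝ) - (s : ℝ)) + θ * (σA₁ + σA₂ + σU)) /
        (1 - Real.exp (θ * (ρA₁ + ρA₂ + ρU)))) := by
  have hA : MGFBounded P θ (increment (A₁ + A₂)) (ρA₁ + ρA₂) (σA₁ + σA₂) := by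
    rw [increment_add]
    exact hA₁.add hA₂ hA₁m hA₂m fun s t hst =>
      (hIndep s s t le_rfl hst).indepFun (i := 0) (j := 1) (by decide)
  have hAm : ∀ s t, s ≤ t → AEMeasurable (increment (A₁ + A₂) s t) P := by
    intro s t hst
    rw [increment_add]
    exact (hA₁m s t hst).add (hA₂m s t hst)
  have hAU : ∀ u s t, u ≤ s → s ≤ t → IndepFun (increment (A₁ + A₂) u t) (U u s) P := by
    intro u s t hus hst
    have hmeas : ∀ i, AEMeasurable (![increment A₁ u t, increment A₂ u t, U u s] i) P := by
      simp [Fin.forall_fin_succ, hA₁m u t (hus.trans hst), hA₂m u t (hus.trans hst), hUm u s hus]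
    rw [increment_add]
    exact (hIndep u s t hus hst).indepFun_add_left₀ hmeas 0 1 2 (by decide) (by decide)
  exact hA.lmgf_increment_output_le hU hθ hAm hUm hAU hB hstab hst

/-- Output bound for an aggregate of two flows through a dynamic `U`-server. -/
theorem output_bound_aggregate
    {Ω : Type*} [MeasurableSpace Ω] (P : Measure Ω) [IsProbabilityMeasure P]
    (θ : ℝ) (hθ : 0 < θ)
    (A₁ A₂ B : ℕ → Ω → ℝ) (U : ℕ → ℕ → Ω → ℝ)
    (ρA₁ σA₁ ρA₂ σA₂ ρU σU : ℝ)
    -- A₁ and A₂ are flows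
    (hA₁meas : ∀ t, Measurable (A₁ t))
    (hA₁mono : ∀ ω, Monotone fun t => A₁ t ω)
    (hA₁zero : ∀ ω, A₁ 0 ω = 0)
    (hA₂meas : ∀ t, Measurable (A₂ t))
    (hA₂mono : ∀ ω, Monotone fun t => A₂ t ω)
    (hA₂zero : ∀ ω, A₂ 0 ω = 0)
    -- U is a service process
    (hUmeas : ∀ s t, Measurable (U s t))
    (hUnonneg : ∀ s t, s ≤ t → ∀ ω, 0 ≤ U s t ω)
    -- MGF bounds
    (hA₁bound : ∀ s t, s ≤ t →
      ∫⁻ ω, ENNReal.ofReal (Real.exp (θ * (A₁ t ω - A₁ s ω))) ∂P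
        ≤ ENNReal.ofReal (Real.exp (θ * ρA₁ * ((t : ℝ) - (s : ℝ)) + θ * σA₁)))
    (hA₂bound : ∀ s t, s ≤ t →
      ∫⁻ ω, ENNReal.ofReal (Real.exp (θ * (A₂ t ω - A₂ s ω))) ∂P
        ≤ ENNReal.ofReal (Real.exp (θ * ρA₂ * ((t : ℝ) - (s : ℝ)) + θ * σA₂)))
    (hUbound : ∀ s t, s ≤ t →
      ∫⁻ ω, ENNReal.ofReal (Real.exp (-θ * U s t ω)) ∂P
        ≤ ENNReal.ofReal (Real.exp (θ * ρU * ((t : ℝ) - (s : ℝ)) + θ * σU)))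
    -- A₁, A₂, U are mutually stochastically independent
    (hIndep : iIndep
      ![⨆ t, MeasurableSpace.comap (A₁ t) inferInstance,
        ⨆ t, MeasurableSpace.comap (A₂ t) inferInstance,
        ⨆ p : ℕ × ℕ, MeasurableSpace.comap (U p.1 p.2) inferInstance] P)
    -- B is the output of a dynamic U-server with input A₁ + A₂ (and is a flow)
    (hBmeas : ∀ t, Measurable (B t))
    (hBmono : ∀ ω, Monotone fun t => B t ω)
    (hBzero : ∀ ω, B 0 ω = 0)
    (hServer : ∀ t ω, sInf ((fun s => (A₁ s ω + A₂ s ω) + U s t ω) '' Set.Icc 0 t) ≤ B t ω)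
    (hBle : ∀ t ω, B t ω ≤ A₁ t ω + A₂ t ω)
    -- stability condition
    (hstab : ρA₁ + ρA₂ + ρU < 0) :
    ∀ s t, s ≤ t →
      ∫⁻ ω, ENNReal.ofReal (Real.exp (θ * (B t ω - B s ω))) ∂P
        ≤ ENNReal.ofReal (Real.exp (θ * (ρA₁ + ρA₂) * ((t : ℝ) - (s : ℝ))
              + θ * (σA₁ + σA₂ + σU))
            / (1 - Real.exp (θ * (ρA₁ + ρA₂ + ρU)))) := by
  have hU : MGFBounded P θ (-U) ρU σU := fun s t hst =>
    (lmgf_neg (U s t) P θ).trans_le (hUbound s t hst)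
  exact fun s t hst => output_bound_aggregate_general hθ
    (fun u v _ => (measurable_increment hA₁meas u v).aemeasurable)
    (fun u v _ => (measurable_increment hA₂meas u v).aemeasurable)
    (fun u v _ => (hUmeas u v).aemeasurable) hA₁bound hA₂bound hU
    (fun u v w _ _ => iIndepFun_increment_increment_of_iIndep hIndep u v w)
    (.of_forall fun ω => ⟨fun v => hServer v ω, fun v => hBle v ω⟩) hstab hst
end
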